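/- For every pair of integers m ≥ n ≥ 9, there exist n positive rational numbers whose product is 1 and whose sum is m. -/

import Mathlib

/-!
The triple `4 / (yz)`, `y² / (2z)`, `z² / (2y)` with `y = a² - a + 1`, `z = a² + a + 1` has product
`1` and sum `a² + 5`. Three such triples, scaled by `(1, 1, 1)` or by `(4, 1/2, 1/2)`, give nine
positive rationals of product `1` and sum `N + 15` or `N + 25` for every sum `N` of three rational
squares. If `m ≥ 25`, one of `m - 15`, `m - 25` is `1` or `2` modulo `4`, and every such natural
number is a sum of three rational squares: it is `r² + p s²` for a prime `p ≡ 1 (mod 4)` chosen by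
Dirichlet's theorem so that Legendre's criterion applies, and `p` is a sum of two squares. The sums
`9, …, 24` are explicit, and appending a `1` raises both the sum and the number of terms by one.
-/

theorem exists_ne_zero_map_eq_zero_abs_le {ι G : Type*} [Fintype ι] [AddGroup G] [Finite G]
    (f : (ι → ℤ) →+ G) (N : ι → ℕ) (hN : Nat.card G < ∏ i, (N i + 1)) :
    ∃ v ≠ 0, f v = 0 ∧ ∀ i, |v i| ≤ N i := by
  classical
  have := Fintype.ofFinite G
  have hcard : (Finset.univ : Finset G).card < (Finset.Icc 0 fun i ↦ (N i : ℤ)).card := by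
    rw [Pi.card_Icc]
    simpa using hN
  obtain ⟨v, hv, w, hw, hne, heq⟩ :=
    Finset.exists_ne_map_eq_of_card_lt_of_maps_to hcard (f := f) fun _ _ ↦ Finset.mem_univ _
  rw [Finset.mem_Icc] at hv hw
  refine ⟨v - w, sub_ne_zero.mpr hne, by rw [map_sub, heq, sub_self], fun i ↦ ?_⟩
  exact abs_sub_le_of_nonneg_of_le (hv.1 i) (hv.2 i) (hw.1 i) (hw.2 i)

theorem sq_le_of_abs_le_sqrt {x : ℤ} {n : ℕ} (h : |x| ≤ n.sqrt) : x ^ 2 ≤ n := by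
  rw [← sq_abs]
  exact (pow_le_pow_left₀ (abs_nonneg x) h 2).trans (mod_cast n.sqrt_le')

theorem exists_small_dvd_sq_add_mul_sq_sub_mul_sq {a b : ℕ} (ha : a ≠ 0) (hb : b ≠ 0)
    (hab : a.Coprime b) (hb_sq : IsSquare (b : ZMod a)) (ha_sq : IsSquare (-a : ZMod b)) :
    ∃ x y z : ℤ, ¬(x = 0 ∧ y = 0 ∧ z = 0) ∧ x ^ 2 ≤ a * b ∧ y ^ 2 ≤ b ∧ z ^ 2 ≤ a ∧
      (a * b : ℤ) ∣ x ^ 2 + a * y ^ 2 - b * z ^ 2 := by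
  have : NeZero a := ⟨ha⟩
  have : NeZero b := ⟨hb⟩
  obtain ⟨s, hs⟩ := hb_sq
  obtain ⟨t, ht⟩ := ha_sq
  let f : (Fin 3 → ℤ) →+ ZMod a × ZMod b :=
    AddMonoidHom.mk' (fun v ↦ (v 0 - s * v 2, v 0 - t * v 1)) fun v w ↦ by
      ext <;> simp only [Pi.add_apply, Int.cast_add, Prod.mk_add_mk] <;> ring
  have hcard : Nat.card (ZMod a × ZMod b) < ∏ i, (![(a * b).sqrt, b.sqrt, a.sqrt] i + 1) := by
    suffices a * b < ((a * b).sqrt + 1) * (b.sqrt + 1) * (a.sqrt + 1) by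
      simpa [Fin.prod_univ_three] using this
    refine lt_of_pow_lt_pow_left₀ 2 (by positivity) ?_
    calc (a * b) ^ 2 = a * b * b * a := by ring
      _ < ((a * b).sqrt + 1) ^ 2 * (b.sqrt + 1) ^ 2 * (a.sqrt + 1) ^ 2 := by
        gcongr <;> exact Nat.lt_succ_sqrt' _
      _ = _ := by ring
  obtain ⟨v, hv, hfv, hle⟩ := exists_ne_zero_map_eq_zero_abs_le f _ hcard
  obtain ⟨hz, hy⟩ : (v 0 : ZMod a) - s * v 2 = 0 ∧ (v 0 : ZMod b) - t * v 1 = 0 :=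
    Prod.mk.inj hfv
  refine ⟨v 0, v 1, v 2, fun h ↦ hv ?_, mod_cast sq_le_of_abs_le_sqrt (hle 0),
    sq_le_of_abs_le_sqrt (hle 1), sq_le_of_abs_le_sqrt (hle 2),
    (Nat.isCoprime_iff_coprime.mpr hab).mul_dvd ?_ ?_⟩
  · ext i
    fin_cases i
    exacts [h.1, h.2.1, h.2.2]
  · rw [← ZMod.intCast_zmod_eq_zero_iff_dvd]
    push_cast
    rw [ZMod.natCast_self]
    linear_combination (v 0 + s * v 2 : ZMod a) * hz - (v 2 : ZMod a) ^ 2 * hs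
  · rw [← ZMod.intCast_zmod_eq_zero_iff_dvd]
    push_cast
    rw [ZMod.natCast_self]
    linear_combination (v 0 + t * v 1 : ZMod b) * hy - (v 1 : ZMod b) ^ 2 * ht

theorem exists_sq_add_mul_sq_sub_mul_sq_eq {a b : ℕ} (ha : ¬IsSquare a) (hb : ¬IsSquare b)
    (hab : a.Coprime b) (hb_sq : IsSquare (b : ZMod a)) (ha_sq : IsSquare (-a : ZMod b)) :
    ∃ x y z : ℤ, ¬(x = 0 ∧ y = 0 ∧ z = 0) ∧
      (x ^ 2 + a * y ^ 2 - b * z ^ 2 = 0 ∨ x ^ 2 + a * y ^ 2 - b * z ^ 2 = a * b) := by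
  have ha₀ : 0 < a := Nat.pos_of_ne_zero fun h ↦ ha (h ▸ IsSquare.zero)
  have hb₀ : 0 < b := Nat.pos_of_ne_zero fun h ↦ hb (h ▸ IsSquare.zero)
  obtain ⟨x, y, z, hne, hx, hy, hz, k, hk⟩ :=
    exists_small_dvd_sq_add_mul_sq_sub_mul_sq ha₀.ne' hb₀.ne' hab hb_sq ha_sq
  have hy_lt : y ^ 2 < b :=
    hy.lt_of_ne fun h ↦ hb <| Int.isSquare_natCast_iff.mp (h ▸ IsSquare.sq y)
  have hz_lt : z ^ 2 < a :=
    hz.lt_of_ne fun h ↦ ha <| Int.isSquare_natCast_iff.mp (h ▸ IsSquare.sq z)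
  have hab₀ : (0 : ℤ) < a * b := by positivity
  have hay : a * y ^ 2 < (a * b : ℤ) := by gcongr
  have hbz : b * z ^ 2 < (a * b : ℤ) := by rw [mul_comm (a : ℤ)]; gcongr
  have hay₀ : (0 : ℤ) ≤ a * y ^ 2 := by positivity
  have hbz₀ : (0 : ℤ) ≤ b * z ^ 2 := by positivity
  have hk_lt : k < 2 := lt_of_mul_lt_mul_left (a := (a * b : ℤ)) (by linarith) hab₀.le
  have hlt_k : -1 < k :=
    lt_of_mul_lt_mul_left (a := (a * b : ℤ)) (by linarith [sq_nonneg x]) hab₀.le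
  refine ⟨x, y, z, hne, ?_⟩
  obtain rfl | rfl : k = 0 ∨ k = 1 := by lia
  · exact .inl (by rw [hk, mul_zero])
  · exact .inr (by rw [hk, mul_one])

-- Multiply the hypothesis by `z ^ 2 + a` and compose the two norm forms of `√(-a)`.
theorem exists_sq_add_mul_sq_eq_of_eq_mul {F : Type*} [Field F] {a b x y z : F}
    (hz : z ^ 2 + a ≠ 0) (h : x ^ 2 + a * y ^ 2 = b * (z ^ 2 + a)) :
    ∃ r s : F, r ^ 2 + a * s ^ 2 = b := by
  refine ⟨(x * z + a * y) / (z ^ 2 + a), (y * z - x) / (z ^ 2 + a), ?_⟩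
  field_simp
  linear_combination (z ^ 2 + a) * h

/-- Legendre's criterion for the solvability of `x² + a y² = b z²`. -/
theorem exists_rat_sq_add_mul_sq_eq {a b : ℕ} (ha : ¬IsSquare a) (hab : a.Coprime b)
    (hb_sq : IsSquare (b : ZMod a)) (ha_sq : IsSquare (-a : ZMod b)) :
    ∃ r s : ℚ, r ^ 2 + a * s ^ 2 = b := by
  by_cases hb : IsSquare b
  · obtain ⟨c, rfl⟩ := hb
    exact ⟨c, 0, by push_cast; ring⟩
  have ha₀ : 0 < a := Nat.pos_of_ne_zero fun h ↦ ha (h ▸ IsSquare.zero)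
  obtain ⟨x, y, z, hne, h | h⟩ := exists_sq_add_mul_sq_sub_mul_sq_eq ha hb hab hb_sq ha_sq
  · have hz : z ≠ 0 := by
      rintro rfl
      have hx : x = 0 := by nlinarith [sq_nonneg y]
      have hy : y = 0 := by simpa [hx, ha₀.ne'] using h
      exact hne ⟨hx, hy, rfl⟩
    have hQ : (x ^ 2 + a * y ^ 2 - b * z ^ 2 : ℚ) = 0 := mod_cast h
    refine ⟨x / z, y / z, ?_⟩
    field_simp
    linear_combination hQ
  · have hQ : (x ^ 2 + a * y ^ 2 - b * z ^ 2 : ℚ) = a * b := mod_cast h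
    exact exists_sq_add_mul_sq_eq_of_eq_mul (x := (x : ℚ)) (y := y) (z := z) (by positivity)
      (by linear_combination hQ)

theorem isSquare_natCast_zmod_of_dvd_add_one {p k : ℕ} [Fact p.Prime] (hp : p % 4 = 1)
    (hk : k % 4 = 1) (hkp : k ∣ p + 1) : IsSquare (k : ZMod p) := by
  have hp_mod : (p : ℤ) ≡ -1 [ZMOD k] :=
    (Int.modEq_iff_dvd.mpr (by simpa using mod_cast hkp)).symm
  suffices h : jacobiSym k p = 1 by simpa using ZMod.isSquare_of_jacobiSym_eq_one h
  calc jacobiSym k p = jacobiSym p k :=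
        jacobiSym.quadratic_reciprocity_one_mod_four hk (Nat.odd_iff.mpr (by lia))
    _ = jacobiSym (-1) k := jacobiSym.mod_left' hp_mod
    _ = ZMod.χ₄ k := jacobiSym.at_neg_one (Nat.odd_iff.mpr (by lia))
    _ = 1 := ZMod.χ₄_nat_one_mod_four hk

theorem exists_prime_add_one_eq_mul {n c q : ℕ} (hq : q ≠ 0) (hcn : 0 < c * n)
    (hcop : (c * n - 1).Coprime q) :
    ∃ p e : ℕ, p.Prime ∧ e ≡ c [MOD q] ∧ p + 1 = n * e := by
  have hcop_n : (c * n - 1).Coprime n := by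
    refine Nat.Coprime.coprime_dvd_right (Dvd.intro_left c rfl) ?_
    simpa [Nat.sub_add_cancel hcn] using
      (Nat.coprime_self_add_right (m := c * n - 1) (n := 1)).mpr (Nat.coprime_one_right _)
  have hn : n ≠ 0 := (Nat.pos_of_mul_pos_left hcn).ne'
  obtain ⟨p, hlt, hp, hmod⟩ :=
    Nat.forall_exists_prime_gt_and_modEq (c * n) (mul_ne_zero hq hn) (hcop.mul_right hcop_n)
  obtain ⟨v, hv⟩ := (Nat.modEq_iff_dvd' (by lia)).mp hmod.symm
  refine ⟨p, c + q * v, hp, by simp [Nat.ModEq], ?_⟩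
  have : n * (c + q * v) = c * n + q * n * v := by ring
  lia

theorem exists_rat_sq_add_sq_add_sq_eq_of_dvd_add_one {p n : ℕ} [Fact p.Prime] (hp : p % 4 = 1)
    (hnp : n ∣ p + 1) (hsq : IsSquare (n : ZMod p)) :
    ∃ x y z : ℚ, x ^ 2 + y ^ 2 + z ^ 2 = n := by
  have hneg : IsSquare (-p : ZMod n) := by
    have h : (p + 1 : ZMod n) = 0 := mod_cast (ZMod.natCast_eq_zero_iff _ _).mpr hnp
    rw [← eq_neg_of_add_eq_zero_right h]
    exact IsSquare.one
  have hcop : p.Coprime n :=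
    Nat.Coprime.coprime_dvd_right hnp (Nat.coprime_self_add_right.mpr (Nat.coprime_one_right p))
  obtain ⟨r, s, hrs⟩ :=
    exists_rat_sq_add_mul_sq_eq (Fact.out : p.Prime).not_isSquare hcop hsq hneg
  obtain ⟨a, b, hab⟩ := Nat.Prime.sq_add_sq (p := p) (by lia)
  refine ⟨r, a * s, b * s, ?_⟩
  rw [← hrs, ← hab]
  push_cast
  ring

theorem exists_rat_sq_add_sq_add_sq_eq {n : ℕ} (hn : n % 4 = 1 ∨ n % 4 = 2) :
    ∃ x y z : ℚ, x ^ 2 + y ^ 2 + z ^ 2 = n := by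
  -- `n` and `e` are inverse modulo `p` when `p + 1 = n * e`, so it is enough that one of them is a
  -- square, and `c`, the class of `e` modulo `4`, makes one of them `1` modulo `4`.
  obtain ⟨c, hcn, hnc⟩ : ∃ c, c * n % 4 = 2 ∧ (n % 4 = 1 ∨ c % 4 = 1) := by
    obtain h | h := hn
    · exact ⟨2, by lia, .inl h⟩
    · exact ⟨1, by lia, .inr rfl⟩
  have hcop : (c * n - 1).Coprime 4 :=
    Nat.Coprime.pow_right 2 (Nat.coprime_two_right.mpr (Nat.odd_iff.mpr (by lia)))
  obtain ⟨p, e, hp, hec, hpe⟩ := exists_prime_add_one_eq_mul (by simp) (by lia) hcop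
  have : Fact p.Prime := ⟨hp⟩
  have hp₄ : p % 4 = 1 := by
    have hmod : p + 1 ≡ c * n [MOD 4] := hpe ▸ mul_comm c n ▸ hec.mul_left n
    rw [Nat.ModEq] at hmod
    lia
  refine exists_rat_sq_add_sq_add_sq_eq_of_dvd_add_one hp₄ ⟨e, hpe⟩ ?_
  obtain hn | hc := hnc
  · exact isSquare_natCast_zmod_of_dvd_add_one hp₄ hn ⟨e, hpe⟩
  · have hmul : (n * e : ZMod p) = 1 := by
      rw [← Nat.cast_mul, ← hpe]
      simp
    rw [eq_inv_of_mul_eq_one_left hmul]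
    have he : e % 4 = 1 := Eq.trans hec hc
    exact (isSquare_natCast_zmod_of_dvd_add_one hp₄ he (Dvd.intro_left n hpe.symm)).inv

/-- `HasPosSumProd n s p` says that `s` is the sum and `p` the product of some `n` positive elements
of `R`. -/
def HasPosSumProd {R : Type*} [CommSemiring R] [LT R] (n : ℕ) (s p : R) : Prop :=
  ∃ a : Fin n → R, (∀ i, 0 < a i) ∧ ∏ i, a i = p ∧ ∑ i, a i = s

namespace HasPosSumProd

section CommSemiring

variable {R : Type*} [CommSemiring R] {k n : ℕ} {s t p q : R}

section LT

variable [LT R]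

theorem three {x y z : R} (hx : 0 < x) (hy : 0 < y) (hz : 0 < z) :
    HasPosSumProd 3 (x + y + z) (x * y * z) :=
  ⟨![x, y, z], by simp [Fin.forall_fin_succ, hx, hy, hz], Fin.prod_univ_three _,
    Fin.sum_univ_three _⟩

theorem append (hs : HasPosSumProd k s p) (ht : HasPosSumProd n t q) :
    HasPosSumProd (k + n) (s + t) (p * q) := by
  obtain ⟨a, ha, rfl, rfl⟩ := hs
  obtain ⟨b, hb, rfl, rfl⟩ := ht
  refine ⟨Fin.append a b, Fin.addCases (by simpa) (by simpa), ?_, ?_⟩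
  · simp [Fin.prod_univ_add]
  · simp [Fin.sum_univ_add]

end LT

variable [PartialOrder R] [IsStrictOrderedRing R]

theorem ones (n : ℕ) : HasPosSumProd n (n : R) 1 :=
  ⟨fun _ ↦ 1, fun _ ↦ one_pos, by simp, by simp⟩

theorem const_mul {u : R} (hu : 0 < u) (h : HasPosSumProd n s p) :
    HasPosSumProd n (u * s) (u ^ n * p) := by
  obtain ⟨a, ha, rfl, rfl⟩ := h
  exact ⟨fun i ↦ u * a i, fun i ↦ mul_pos hu (ha i), by simp [Finset.prod_mul_distrib],
    (Finset.mul_sum ..).symm⟩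

end CommSemiring

section Field

variable {K : Type*} [Field K] [LinearOrder K] [IsStrictOrderedRing K] {s : K}

theorem three_sq_add_five (a : K) : HasPosSumProd 3 (a ^ 2 + 5) 1 := by
  obtain ⟨y, hy⟩ : ∃ y, y = a ^ 2 - a + 1 := ⟨_, rfl⟩
  obtain ⟨z, hz⟩ : ∃ z, z = a ^ 2 + a + 1 := ⟨_, rfl⟩
  have hy₀ : 0 < y := by nlinarith [sq_nonneg (a - 1 / 2)]
  have hz₀ : 0 < z := by nlinarith [sq_nonneg (a + 1 / 2)]
  have hcubes : y ^ 3 + z ^ 3 + 8 = 2 * (a ^ 2 + 5) * (y * z) := by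
    rw [hy, hz]
    ring
  convert three (x := 4 / (y * z)) (y := y ^ 2 / (2 * z)) (z := z ^ 2 / (2 * y)) (by positivity)
    (by positivity) (by positivity) using 1
  · field_simp
    linear_combination -hcubes
  · field_simp
    norm_num

theorem nine_of_mul_mul_eq_one {u v w : K} (hu : 0 < u) (hv : 0 < v) (hw : 0 < w)
    (h : u * v * w = 1) (a b c : K) :
    HasPosSumProd 9 (u * (a ^ 2 + 5) + v * (b ^ 2 + 5) + w * (c ^ 2 + 5)) 1 := by
  have ha := (three_sq_add_five a).const_mul hu
  have hb := (three_sq_add_five b).const_mul hv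
  have hc := (three_sq_add_five c).const_mul hw
  have hprod : u ^ 3 * 1 * (v ^ 3 * 1) * (w ^ 3 * 1) = 1 := by
    linear_combination ((u * v * w) ^ 2 + u * v * w + 1) * h
  exact hprod ▸ (ha.append hb).append hc

theorem nine_of_eq_add_fifteen (a b c : K) (h : a ^ 2 + b ^ 2 + c ^ 2 + 15 = s) :
    HasPosSumProd 9 s 1 := by
  convert nine_of_mul_mul_eq_one one_pos one_pos one_pos (by norm_num) a b c using 1
  linear_combination -h

theorem nine_of_eq_add_twentyFive (a b c : K) (h : a ^ 2 + b ^ 2 + c ^ 2 + 25 = s) :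
    HasPosSumProd 9 s 1 := by
  convert nine_of_mul_mul_eq_one (u := 4) (v := 1 / 2) (w := 1 / 2) (by norm_num) (by norm_num)
    (by norm_num) (by norm_num) (a / 2) (b + c) (b - c) using 1
  linear_combination -h

theorem nine_of_eq_add_thirteen (a b : K) (h : a ^ 2 + b ^ 2 + 13 = s) : HasPosSumProd 9 s 1 := by
  convert ((three_sq_add_five a).append (three_sq_add_five b)).append (ones 3) using 1
  · push_cast
    linear_combination -h
  · norm_num

theorem nine_of_eq_add_eleven (a : K) (h : a ^ 2 + 11 = s) : HasPosSumProd 9 s 1 := by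
  convert (three_sq_add_five a).append (ones 6) using 1
  · push_cast
    linear_combination -h
  · norm_num

theorem nine_ten : HasPosSumProd 9 (10 : K) 1 := by
  have hfour : HasPosSumProd 4 (5 : K) 1 :=
    ⟨![2, 2, 1 / 2, 1 / 2], by simp [Fin.forall_fin_succ], by simp [Fin.prod_univ_succ],
      by norm_num [Fin.sum_univ_succ]⟩
  convert hfour.append (ones 5) using 1 <;> norm_num

theorem nine_of_lt {m : ℕ} (h₉ : 9 ≤ m) (h₂₅ : m < 25) : HasPosSumProd 9 (m : K) 1 := by
  interval_cases m
  · exact .ones 9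
  · exact_mod_cast nine_ten
  · exact .nine_of_eq_add_eleven 0 (by norm_num)
  · exact .nine_of_eq_add_eleven 1 (by norm_num)
  · exact .nine_of_eq_add_thirteen 0 0 (by norm_num)
  · exact .nine_of_eq_add_thirteen 1 0 (by norm_num)
  · exact .nine_of_eq_add_thirteen 1 1 (by norm_num)
  · exact .nine_of_eq_add_fifteen 1 0 0 (by norm_num)
  · exact .nine_of_eq_add_thirteen 2 0 (by norm_num)
  · exact .nine_of_eq_add_thirteen 2 1 (by norm_num)
  · exact .nine_of_eq_add_fifteen 2 0 0 (by norm_num)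
  · exact .nine_of_eq_add_eleven 3 (by norm_num)
  · exact .nine_of_eq_add_thirteen 2 2 (by norm_num)
  · exact .nine_of_eq_add_thirteen 3 0 (by norm_num)
  · exact .nine_of_eq_add_thirteen 3 1 (by norm_num)
  · exact .nine_of_eq_add_fifteen 3 0 0 (by norm_num)

end Field

theorem nine_of_le {m : ℕ} (hm : 25 ≤ m) : HasPosSumProd 9 (m : ℚ) 1 := by
  obtain h | h : ((m - 15) % 4 = 1 ∨ (m - 15) % 4 = 2) ∨ ((m - 25) % 4 = 1 ∨ (m - 25) % 4 = 2) := by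
    lia
  · obtain ⟨x, y, z, hxyz⟩ := exists_rat_sq_add_sq_add_sq_eq h
    refine .nine_of_eq_add_fifteen x y z ?_
    rw [hxyz, Nat.cast_sub (by lia)]
    simp
  · obtain ⟨x, y, z, hxyz⟩ := exists_rat_sq_add_sq_add_sq_eq h
    refine .nine_of_eq_add_twentyFive x y z ?_
    rw [hxyz, Nat.cast_sub hm]
    simp

end HasPosSumProd

theorem stmt_19 (m n : ℕ) (hn : 9 ≤ n) (hnm : n ≤ m) :
    ∃ a : Fin n → ℚ, (∀ i, 0 < a i) ∧ (∏ i, a i) = 1 ∧ (∑ i, a i) = m := by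
  obtain ⟨k, rfl⟩ := Nat.exists_eq_add_of_le hn
  obtain ⟨l, rfl⟩ := Nat.exists_eq_add_of_le' (show k ≤ m by lia)
  have hnine : HasPosSumProd 9 (l : ℚ) 1 := by
    obtain hl | hl := lt_or_ge l 25
    · exact .nine_of_lt (by lia) hl
    · exact .nine_of_le hl
  have h := hnine.append (.ones k)
  rwa [one_mul, ← Nat.cast_add] at h
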